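/- Let φ₁, φ₂ ∈ (0, π) and Z₁, Z₂ ∈ ℂ, and set a₁₂ = sin²((φ₂ − φ₁)/2)/sin²((φ₂ + φ₁)/2). Let G be the 2×2 complex matrix with entries g_{ij} = (δ_{ij} + e^{Z_i + Z_j})/(e^{−iφ_i} − e^{iφ_j}) and H the 2×2 matrix with entries h_{ij} = (δ_{ij} + e^{(Z_i − iφ_i) + (Z_j − iφ_j)})/(e^{−iφ_i} − e^{iφ_j}) (all denominators are nonzero under the stated hypotheses). Then (−4 sin φ₁ sin φ₂)·det G = 1 + e^{2Z₁} + e^{2Z₂} + a₁₂ e^{2(Z₁ + Z₂)} and (−4 sin φ₁ sin φ₂)·det H = 1 + e^{2(Z₁ − iφ₁)} + e^{2(Z₂ − iφ₂)} + a₁₂ e^{2(Z₁ + Z₂ − iφ₁ − iφ₂)}. -/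

import Mathlib

open Complex

/-- The difference of two exponentials as a sine of the half sum times a phase. -/
lemma exp_neg_I_mul_sub_exp_I_mul (a b : ℂ) :
    exp (-I * a) - exp (I * b) = -2 * I * sin ((a + b) / 2) * exp (I * ((b - a) / 2)) := by
  have hleft : exp (-I * a) = exp (-((a + b) / 2) * I) * exp (I * ((b - a) / 2)) := by
    rw [← exp_add]; ring_nf
  have hright : exp (I * b) = exp ((a + b) / 2 * I) * exp (I * ((b - a) / 2)) := by
    rw [← exp_add]; ring_nf
  rw [hleft, hright, Complex.sin]
  linear_combination (exp (-((a + b) / 2) * I) - exp ((a + b) / 2 * I))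
    * exp (I * ((b - a) / 2)) * I_sq

lemma sin_half_add_sq_sub_sin_half_sub_sq (a b : ℝ) :
    Real.sin ((b + a) / 2) ^ 2 - Real.sin ((b - a) / 2) ^ 2 = Real.sin a * Real.sin b := by
  have ha : Real.sin a = Real.sin ((b + a) / 2 - (b - a) / 2) := by ring_nf
  have hb : Real.sin b = Real.sin ((b + a) / 2 + (b - a) / 2) := by ring_nf
  rw [ha, hb, Real.sin_sub, Real.sin_add]
  linear_combination Real.sin ((b - a) / 2) ^ 2 * Real.sin_sq_add_cos_sq ((b + a) / 2)
    - Real.sin ((b + a) / 2) ^ 2 * Real.sin_sq_add_cos_sq ((b - a) / 2)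

/-- The two-soliton tau determinant, for arbitrary complex phases `W₁`, `W₂`. -/
lemma two_soliton_det {φ₁ φ₂ : ℝ} (hφ₁ : φ₁ ∈ Set.Ioo 0 Real.pi) (hφ₂ : φ₂ ∈ Set.Ioo 0 Real.pi)
    (W₁ W₂ : ℂ) :
    ((-4 * Real.sin φ₁ * Real.sin φ₂ : ℝ) : ℂ) *
      ((1 + exp (W₁ + W₁)) / (exp (-I * φ₁) - exp (I * φ₁))
          * ((1 + exp (W₂ + W₂)) / (exp (-I * φ₂) - exp (I * φ₂)))
        - exp (W₁ + W₂) / (exp (-I * φ₁) - exp (I * φ₂))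
          * (exp (W₂ + W₁) / (exp (-I * φ₂) - exp (I * φ₁))))
      = 1 + exp (2 * W₁) + exp (2 * W₂)
        + ((Real.sin ((φ₂ - φ₁) / 2) ^ 2 / Real.sin ((φ₂ + φ₁) / 2) ^ 2 : ℝ) : ℂ)
          * exp (2 * (W₁ + W₂)) := by
  have hs₁ : (Real.sin φ₁ : ℂ) ≠ 0 :=
    ofReal_ne_zero.2 (Real.sin_pos_of_mem_Ioo hφ₁).ne'
  have hs₂ : (Real.sin φ₂ : ℂ) ≠ 0 :=
    ofReal_ne_zero.2 (Real.sin_pos_of_mem_Ioo hφ₂).ne'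
  have hs : (Real.sin ((φ₂ + φ₁) / 2) : ℂ) ≠ 0 :=
    ofReal_ne_zero.2 (Real.sin_pos_of_pos_of_lt_pi
      (by linarith [hφ₁.1, hφ₂.1]) (by linarith [hφ₁.2, hφ₂.2])).ne'
  have hdiag (x : ℝ) : exp (-I * x) - exp (I * x) = -2 * I * Real.sin x := by
    rw [exp_neg_I_mul_sub_exp_I_mul]
    simp
  have hoff : (exp (-I * φ₁) - exp (I * φ₂)) * (exp (-I * φ₂) - exp (I * φ₁))
      = -4 * (Real.sin ((φ₂ + φ₁) / 2) : ℂ) ^ 2 := by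
    have hphase : exp (I * (((φ₂ : ℂ) - φ₁) / 2)) * exp (I * (((φ₁ : ℂ) - φ₂) / 2)) = 1 := by
      rw [← exp_add, ← exp_zero]; ring_nf
    rw [exp_neg_I_mul_sub_exp_I_mul, exp_neg_I_mul_sub_exp_I_mul, add_comm (φ₁ : ℂ)]
    push_cast
    linear_combination 4 * I ^ 2 * sin (((φ₂ : ℂ) + φ₁) / 2) ^ 2 * hphase
      + 4 * sin (((φ₂ : ℂ) + φ₁) / 2) ^ 2 * I_sq
  have htrig : (Real.sin ((φ₂ + φ₁) / 2) : ℂ) ^ 2 - (Real.sin ((φ₂ - φ₁) / 2) : ℂ) ^ 2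
      = Real.sin φ₁ * Real.sin φ₂ := by
    exact_mod_cast sin_half_add_sq_sub_sin_half_sub_sq φ₁ φ₂
  have hdd : (-2 * I * Real.sin φ₁) * (-2 * I * Real.sin φ₂)
      = -4 * (Real.sin φ₁ : ℂ) * Real.sin φ₂ := by
    linear_combination 4 * (Real.sin φ₁ : ℂ) * Real.sin φ₂ * I_sq
  rw [div_mul_div_comm, div_mul_div_comm, hoff, hdiag, hdiag, hdd]
  simp only [ofReal_mul, ofReal_div, ofReal_pow, ofReal_neg, ofReal_ofNat, two_mul, exp_add]
  generalize (Real.sin φ₁ : ℂ) = s₁ at *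
  generalize (Real.sin φ₂ : ℂ) = s₂ at *
  generalize (Real.sin ((φ₂ + φ₁) / 2) : ℂ) = s at *
  generalize (Real.sin ((φ₂ - φ₁) / 2) : ℂ) = t at *
  field_simp
  linear_combination exp W₁ ^ 2 * exp W₂ ^ 2 * htrig

/-- Factorization of the 2×2 tau determinants of the two-dark-soliton solution:
with `g_{ij} = (δ_{ij} + e^{Z_i+Z_j})/(e^{−iφ_i} − e^{iφ_j})` and
`h_{ij} = (δ_{ij} + e^{(Z_i−iφ_i)+(Z_j−iφ_j)})/(e^{−iφ_i} − e^{iφ_j})`, one has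
`(−4 sin φ₁ sin φ₂) det G = 1 + e^{2Z₁} + e^{2Z₂} + a₁₂ e^{2(Z₁+Z₂)}` and likewise for `H`,
where `a₁₂ = sin²((φ₂−φ₁)/2)/sin²((φ₂+φ₁)/2)`. -/
theorem stmt12 (φ₁ φ₂ : ℝ) (hφ₁ : φ₁ ∈ Set.Ioo 0 Real.pi) (hφ₂ : φ₂ ∈ Set.Ioo 0 Real.pi)
    (Z₁ Z₂ : ℂ) :
    let φ : Fin 2 → ℝ := ![φ₁, φ₂]
    let Z : Fin 2 → ℂ := ![Z₁, Z₂]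
    let a₁₂ : ℝ := Real.sin ((φ₂ - φ₁) / 2) ^ 2 / Real.sin ((φ₂ + φ₁) / 2) ^ 2
    let G : Matrix (Fin 2) (Fin 2) ℂ := Matrix.of fun i j =>
      ((if i = j then 1 else 0) + Complex.exp (Z i + Z j))
        / (Complex.exp (-Complex.I * ((φ i : ℝ) : ℂ)) - Complex.exp (Complex.I * ((φ j : ℝ) : ℂ)))
    let H : Matrix (Fin 2) (Fin 2) ℂ := Matrix.of fun i j =>
      ((if i = j then 1 else 0)
          + Complex.exp ((Z i - Complex.I * ((φ i : ℝ) : ℂ)) + (Z j - Complex.I * ((φ j : ℝ) : ℂ))))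
        / (Complex.exp (-Complex.I * ((φ i : ℝ) : ℂ)) - Complex.exp (Complex.I * ((φ j : ℝ) : ℂ)))
    (((-4 * Real.sin φ₁ * Real.sin φ₂ : ℝ) : ℂ) * G.det
        = 1 + Complex.exp (2 * Z₁) + Complex.exp (2 * Z₂)
          + ((a₁₂ : ℝ) : ℂ) * Complex.exp (2 * (Z₁ + Z₂))) ∧
      (((-4 * Real.sin φ₁ * Real.sin φ₂ : ℝ) : ℂ) * H.det
        = 1 + Complex.exp (2 * (Z₁ - Complex.I * ((φ₁ : ℝ) : ℂ)))
          + Complex.exp (2 * (Z₂ - Complex.I * ((φ₂ : ℝ) : ℂ)))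
          + ((a₁₂ : ℝ) : ℂ)
              * Complex.exp (2 * (Z₁ + Z₂ - Complex.I * ((φ₁ : ℝ) : ℂ) - Complex.I * ((φ₂ : ℝ) : ℂ)))) := by
  intro φ Z a₁₂ G H
  constructor
  · simpa [G, φ, Z, a₁₂, Matrix.det_fin_two] using two_soliton_det hφ₁ hφ₂ Z₁ Z₂
  · rw [show Z₁ + Z₂ - I * φ₁ - I * φ₂ = Z₁ - I * φ₁ + (Z₂ - I * φ₂) by ring]
    simpa [H, φ, Z, a₁₂, Matrix.det_fin_two] using
      two_soliton_det hφ₁ hφ₂ (Z₁ - I * φ₁) (Z₂ - I * φ₂)
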